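/- Let G = diag(g₁,g₂,g₃), gᵢ > 0 distinct. Define h₁ = min{g₁+g₂, g₂+g₃, g₃+g₁}, h₂ = max{(g₁−g₂)², (g₂−g₃)², (g₃−g₁)²}, h₃ = max{(g₁+g₂)², (g₂+g₃)², (g₃+g₁)²}, and b₁ = h₁/(h₂+h₃). Then for all R, R_d ∈ SO(3): b₁ ‖e_R‖² ≤ Ψ(R,R_d), where Ψ(R,R_d) = (1/2) tr(G(I − R_dᵀR)) and e_R = (1/2)(G R_dᵀ R − Rᵀ R_d G)^∨. -/

import Mathlib

open Matrix

noncomputable section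

/-- The hat map `ℝ³ → 𝔰𝔬(3)`, with `hat x *ᵥ y = x × y`. -/
def hat (x : Fin 3 → ℝ) : Matrix (Fin 3) (Fin 3) ℝ :=
  !![0, -x 2, x 1; x 2, 0, -x 0; -x 1, x 0, 0]

/-- The vee map, inverse of the hat map on skew-symmetric matrices. -/
def vee (A : Matrix (Fin 3) (Fin 3) ℝ) : Fin 3 → ℝ :=
  ![A 2 1, A 0 2, A 1 0]

/-- Membership in the special orthogonal group SO(3). -/
def SO3 (R : Matrix (Fin 3) (Fin 3) ℝ) : Prop :=
  Rᵀ * R = 1 ∧ R.det = 1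

/-- Euclidean norm on `ℝ³` (and `ℝ²`). -/
def norm3 (x : Fin 3 → ℝ) : ℝ := Real.sqrt (x ⬝ᵥ x)

def norm2v (x : Fin 2 → ℝ) : ℝ := Real.sqrt (x ⬝ᵥ x)

/-- Attitude error function `Ψ(R,R_d) = (1/2) tr (G (I - R_dᵀ R))`. -/
def Psi (G R Rd : Matrix (Fin 3) (Fin 3) ℝ) : ℝ :=
  (1 / 2) * (G * (1 - Rdᵀ * R)).trace

/-- Attitude error vector `e_R = (1/2) (G R_dᵀ R - Rᵀ R_d G)^∨`. -/
def eR (G R Rd : Matrix (Fin 3) (Fin 3) ℝ) : Fin 3 → ℝ :=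
  (1 / 2 : ℝ) • vee (G * Rdᵀ * R - Rᵀ * Rd * G)

/-- Third standard basis vector of `ℝ³`. -/
def e3 : Fin 3 → ℝ := ![0, 0, 1]

/-!
For a rotation `Q`, `‖Q - Qᵀ‖² = 2 (3 - tr Q) (1 + tr Q)` in the Frobenius norm, so `tr Q ≥ -1`;
applied to `Q` composed with a half-turn about the `k`-th axis, this reads
`tₖ := 1 + 2 Qₖₖ - tr Q ≥ 0`. For `Q = R_dᵀ R`, the error function is the combination
`Ψ = ¼ ∑ₖ (gᵢ + gⱼ) tₖ` of these numbers, whose sum is `3 - tr Q`, so `h₁ (3 - tr Q) / 4 ≤ Ψ`.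
Conversely `‖e_R‖²` is bounded by Cauchy–Schwarz in terms of the off-diagonal entries of `Q`, whose
squares add up to `3 - ∑ Qₖₖ² ≤ 2 (3 - tr Q)`; hence `‖e_R‖² ≤ (h₂ + h₃) (3 - tr Q) / 4`.
-/

section Orthogonal

variable {n α : Type*} [Fintype n] [DecidableEq n] [CommRing α]

lemma adjugate_eq_transpose_of_orthogonal {Q : Matrix n n α} (hQ : Qᵀ * Q = 1)
    (hdet : Q.det = 1) : Q.adjugate = Qᵀ := by
  have hadj : Q.adjugate * Q = 1 := by rw [adjugate_mul, hdet, one_smul]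
  exact left_inv_eq_right_inv hadj (mul_eq_one_comm.mp hQ)

lemma sum_sum_sq_of_orthogonal {Q : Matrix n n α} (hQ : Qᵀ * Q = 1) :
    ∑ i, ∑ j, Q i j ^ 2 = Fintype.card n := by
  rw [← trace_one, ← hQ, Finset.sum_comm]
  simp only [trace, diag_apply, mul_apply, transpose_apply, sq]

lemma two_mul_trace_adjugate_fin_three (A : Matrix (Fin 3) (Fin 3) α) :
    2 * A.adjugate.trace = A.trace ^ 2 - (A * A).trace := by
  simp only [adjugate_fin_three, trace_fin_three, mul_apply, Fin.sum_univ_three, of_apply,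
    cons_val]
  ring

lemma trace_transpose_mul_self_sub_transpose {Q : Matrix (Fin 3) (Fin 3) α} (hQ : Qᵀ * Q = 1)
    (hdet : Q.det = 1) :
    ((Q - Qᵀ)ᵀ * (Q - Qᵀ)).trace = 2 * ((3 - Q.trace) * (1 + Q.trace)) := by
  have htrace_sq : (Q * Q).trace = Q.trace ^ 2 - 2 * Q.trace := by
    have h := two_mul_trace_adjugate_fin_three Q
    rw [adjugate_eq_transpose_of_orthogonal hQ hdet, trace_transpose] at h
    linear_combination h
  have hexpand : (Q - Qᵀ)ᵀ * (Q - Qᵀ) = 1 - (Q * Q)ᵀ - Q * Q + 1 := by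
    rw [transpose_sub, transpose_transpose, sub_mul, mul_sub, mul_sub, hQ,
      mul_eq_one_comm.mp hQ, transpose_mul]
    abel
  rw [hexpand, trace_add, trace_sub, trace_sub, trace_transpose, htrace_sq, trace_one,
    Fintype.card_fin]
  push_cast
  ring

end Orthogonal

/-- The rotation by `π` about the `i`-th coordinate axis. Composing a rotation with it turns bounds
on the trace into bounds on the `i`-th diagonal entry relative to the trace. -/
def halfTurn (i : Fin 3) : Matrix (Fin 3) (Fin 3) ℝ :=
  diagonal fun j ↦ if j = i then 1 else -1

lemma so3_halfTurn (i : Fin 3) : SO3 (halfTurn i) := by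
  refine ⟨?_, ?_⟩
  · rw [halfTurn, diagonal_transpose, diagonal_mul_diagonal, ← diagonal_one]
    congr 1
    ext j
    split_ifs <;> norm_num
  · rw [halfTurn, det_diagonal]
    fin_cases i <;> simp [Fin.prod_univ_three]

lemma trace_mul_halfTurn (Q : Matrix (Fin 3) (Fin 3) ℝ) (i : Fin 3) :
    (Q * halfTurn i).trace = 2 * Q i i - Q.trace := by
  fin_cases i <;> simp [halfTurn, trace_fin_three, mul_diagonal] <;> ring

namespace SO3

variable {Q R : Matrix (Fin 3) (Fin 3) ℝ}

protected lemma mul (hQ : SO3 Q) (hR : SO3 R) : SO3 (Q * R) := by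
  refine ⟨?_, by rw [det_mul, hQ.2, hR.2, one_mul]⟩
  rw [transpose_mul, Matrix.mul_assoc, ← Matrix.mul_assoc Qᵀ, hQ.1, Matrix.one_mul, hR.1]

protected lemma transpose (hQ : SO3 Q) : SO3 Qᵀ :=
  ⟨by rw [transpose_transpose, mul_eq_one_comm.mp hQ.1], by rw [det_transpose, hQ.2]⟩

lemma neg_one_le_trace (hQ : SO3 Q) : -1 ≤ Q.trace := by
  have hprod : 0 ≤ (3 - Q.trace) * (1 + Q.trace) := by
    have h := (posSemidef_conjTranspose_mul_self (Q - Qᵀ)).trace_nonneg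
    rw [conjTranspose_eq_transpose_of_trivial,
      trace_transpose_mul_self_sub_transpose hQ.1 hQ.2] at h
    linarith
  nlinarith

lemma trace_le_one_add_two_mul_diag (hQ : SO3 Q) (i : Fin 3) :
    Q.trace ≤ 1 + 2 * Q i i := by
  have h := (hQ.mul (so3_halfTurn i)).neg_one_le_trace
  rw [trace_mul_halfTurn] at h
  linarith

end SO3

lemma sum_sum_erase_sq_le_of_orthogonal {n : Type*} [Fintype n] [DecidableEq n]
    {Q : Matrix n n ℝ} (hQ : Qᵀ * Q = 1) :
    ∑ i, ∑ j ∈ Finset.univ.erase i, Q i j ^ 2 ≤ 2 * (Fintype.card n - Q.trace) := by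
  have hdiag : 0 ≤ ∑ i, (1 - Q i i) ^ 2 := Finset.sum_nonneg fun i _ ↦ sq_nonneg _
  simp only [sub_sq, one_pow, mul_one, Finset.sum_add_distrib, Finset.sum_sub_distrib,
    ← Finset.mul_sum, Finset.sum_const, Finset.card_univ, nsmul_eq_mul] at hdiag
  simp only [Finset.sum_erase_eq_sub (Finset.mem_univ _), Finset.sum_sub_distrib,
    sum_sum_sq_of_orthogonal hQ, trace, diag_apply]
  linarith

lemma sq_mul_sub_mul_le {a b x y K : ℝ} (hK : a ^ 2 + b ^ 2 ≤ K) :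
    (a * x - b * y) ^ 2 ≤ K * (x ^ 2 + y ^ 2) :=
  calc (a * x - b * y) ^ 2 ≤ (a ^ 2 + b ^ 2) * (x ^ 2 + y ^ 2) := by
        linarith [sq_nonneg (a * y + b * x)]
    _ ≤ K * (x ^ 2 + y ^ 2) := by gcongr

lemma norm3_sq (x : Fin 3 → ℝ) : norm3 x ^ 2 = x 0 ^ 2 + x 1 ^ 2 + x 2 ^ 2 := by
  have hdot : x ⬝ᵥ x = x 0 ^ 2 + x 1 ^ 2 + x 2 ^ 2 := by
    simp only [dotProduct, Fin.sum_univ_three, sq]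
  rw [norm3, hdot, Real.sq_sqrt (by positivity)]

section AttitudeError

variable (g : Fin 3 → ℝ) (R Rd : Matrix (Fin 3) (Fin 3) ℝ)

lemma Psi_diagonal :
    Psi (diagonal g) R Rd = 1 / 2 * ∑ i, g i * (1 - (Rdᵀ * R) i i) := by
  simp only [Psi, trace, diag_apply, diagonal_mul, Matrix.sub_apply, one_apply_eq]

lemma norm3_eR_diagonal_sq {Q : Matrix (Fin 3) (Fin 3) ℝ} (hQ : Rdᵀ * R = Q) :
    norm3 (eR (diagonal g) R Rd) ^ 2
      = 1 / 4 * ((g 2 * Q 2 1 - g 1 * Q 1 2) ^ 2 + (g 0 * Q 0 2 - g 2 * Q 2 0) ^ 2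
        + (g 1 * Q 1 0 - g 0 * Q 0 1) ^ 2) := by
  have hQt : Rᵀ * Rd = Qᵀ := by rw [← hQ, transpose_mul, transpose_transpose]
  rw [norm3_sq, eR, Matrix.mul_assoc, hQ, hQt]
  simp only [vee, Pi.smul_apply, smul_eq_mul, Matrix.sub_apply, diagonal_mul, mul_diagonal,
    transpose_apply, cons_val]
  ring

variable {g R Rd}

lemma norm3_eR_diagonal_sq_le (hQ : (Rdᵀ * R)ᵀ * (Rdᵀ * R) = 1) {K : ℝ}
    (hK : ∀ i j, i ≠ j → g i ^ 2 + g j ^ 2 ≤ K) :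
    norm3 (eR (diagonal g) R Rd) ^ 2 ≤ K / 2 * (3 - (Rdᵀ * R).trace) := by
  have hK₀ : 0 ≤ K := (add_nonneg (sq_nonneg _) (sq_nonneg _)).trans (hK 0 1 (by decide))
  have hoff := mul_le_mul_of_nonneg_left (sum_sum_erase_sq_le_of_orthogonal hQ) hK₀
  simp only [Finset.sum_erase_eq_sub (Finset.mem_univ _), Fin.sum_univ_three, Fintype.card_fin,
    Nat.cast_ofNat] at hoff
  rw [norm3_eR_diagonal_sq g R Rd rfl]
  set Q := Rdᵀ * R
  linarith [sq_mul_sub_mul_le (x := Q 2 1) (y := Q 1 2) (hK 2 1 (by decide)),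
    sq_mul_sub_mul_le (x := Q 0 2) (y := Q 2 0) (hK 0 2 (by decide)),
    sq_mul_sub_mul_le (x := Q 1 0) (y := Q 0 1) (hK 1 0 (by decide)), hoff]

lemma mul_three_sub_trace_le_Psi_diagonal (hQ : SO3 (Rdᵀ * R)) {h : ℝ}
    (hh : ∀ i j, i ≠ j → h ≤ g i + g j) :
    h / 4 * (3 - (Rdᵀ * R).trace) ≤ Psi (diagonal g) R Rd := by
  rw [Psi_diagonal, Fin.sum_univ_three]
  set Q := Rdᵀ * R
  have ht (i : Fin 3) : 0 ≤ 1 + 2 * Q i i - Q.trace :=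
    sub_nonneg.mpr (hQ.trace_le_one_add_two_mul_diag i)
  have h₀ := mul_le_mul_of_nonneg_right (hh 1 2 (by decide)) (ht 0)
  have h₁ := mul_le_mul_of_nonneg_right (hh 2 0 (by decide)) (ht 1)
  have h₂ := mul_le_mul_of_nonneg_right (hh 0 1 (by decide)) (ht 2)
  rw [trace_fin_three] at *
  linarith

lemma mul_norm3_eR_diagonal_sq_le (hQ : SO3 (Rdᵀ * R)) {h K : ℝ} (hh₀ : 0 ≤ h)
    (hh : ∀ i j, i ≠ j → h ≤ g i + g j) (hK : ∀ i j, i ≠ j → g i ^ 2 + g j ^ 2 ≤ K) :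
    h * norm3 (eR (diagonal g) R Rd) ^ 2 ≤ 2 * K * Psi (diagonal g) R Rd := by
  have hK₀ : 0 ≤ K := (add_nonneg (sq_nonneg _) (sq_nonneg _)).trans (hK 0 1 (by decide))
  calc h * norm3 (eR (diagonal g) R Rd) ^ 2
      ≤ h * (K / 2 * (3 - (Rdᵀ * R).trace)) := by gcongr; exact norm3_eR_diagonal_sq_le hQ.1 hK
    _ = 2 * K * (h / 4 * (3 - (Rdᵀ * R).trace)) := by ring
    _ ≤ 2 * K * Psi (diagonal g) R Rd := by
        gcongr; exact mul_three_sub_trace_le_Psi_diagonal hQ hh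

end AttitudeError

section CyclicExtrema

variable {α : Type*} [LinearOrder α] {f : Fin 3 → Fin 3 → α}

lemma min_cyclic_le (hf : ∀ i j, f i j = f j i) {i j : Fin 3} (hij : i ≠ j) :
    min (f 0 1) (min (f 1 2) (f 2 0)) ≤ f i j := by
  fin_cases i <;> fin_cases j <;> grind

lemma le_max_cyclic (hf : ∀ i j, f i j = f j i) {i j : Fin 3} (hij : i ≠ j) :
    f i j ≤ max (f 0 1) (max (f 1 2) (f 2 0)) :=
  min_cyclic_le (α := αᵒᵈ) hf hij

end CyclicExtrema

theorem psi_lower_bound_general (g : Fin 3 → ℝ) (hsum : ∀ i j, i ≠ j → 0 ≤ g i + g j)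
    (hg : g ≠ 0)
    (h₁ h₂ h₃ b₁ : ℝ)
    (hh₁ : h₁ = min (g 0 + g 1) (min (g 1 + g 2) (g 2 + g 0)))
    (hh₂ : h₂ = max ((g 0 - g 1) ^ 2) (max ((g 1 - g 2) ^ 2) ((g 2 - g 0) ^ 2)))
    (hh₃ : h₃ = max ((g 0 + g 1) ^ 2) (max ((g 1 + g 2) ^ 2) ((g 2 + g 0) ^ 2)))
    (hb₁ : b₁ = h₁ / (h₂ + h₃))
    (R Rd : Matrix (Fin 3) (Fin 3) ℝ) (hR : SO3 R) (hRd : SO3 Rd) :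
    b₁ * norm3 (eR (diagonal g) R Rd) ^ 2 ≤ Psi (diagonal g) R Rd := by
  have h₁_nonneg : 0 ≤ h₁ := by
    rw [hh₁]
    exact le_min (hsum 0 1 (by decide)) (le_min (hsum 1 2 (by decide)) (hsum 2 0 (by decide)))
  have h₁_le (i j) (hij : i ≠ j) : h₁ ≤ g i + g j :=
    hh₁ ▸ min_cyclic_le (f := fun i j ↦ g i + g j) (fun _ _ ↦ add_comm _ _) hij
  have sq_sub_le (i j) (hij : i ≠ j) : (g i - g j) ^ 2 ≤ h₂ :=
    hh₂ ▸ le_max_cyclic (f := fun i j ↦ (g i - g j) ^ 2) (fun _ _ ↦ sub_sq_comm _ _) hij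
  have sq_add_le (i j) (hij : i ≠ j) : (g i + g j) ^ 2 ≤ h₃ :=
    hh₃ ▸ le_max_cyclic (f := fun i j ↦ (g i + g j) ^ 2) (fun _ _ ↦ by rw [add_comm]) hij
  have sum_sq_le (i j) (hij : i ≠ j) : g i ^ 2 + g j ^ 2 ≤ (h₂ + h₃) / 2 := by
    linarith [sq_sub_le i j hij, sq_add_le i j hij]
  have denom_pos : 0 < h₂ + h₃ := by
    obtain ⟨i, hi⟩ := Function.ne_iff.mp hg
    obtain ⟨j, hj⟩ := exists_ne i
    linarith [sum_sq_le i j hj.symm, sq_pos_of_ne_zero hi, sq_nonneg (g j)]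
  rw [hb₁, div_mul_eq_mul_div, div_le_iff₀' denom_pos, ← mul_div_cancel₀ (h₂ + h₃) two_ne_zero]
  exact mul_norm3_eR_diagonal_sq_le (hRd.transpose.mul hR) h₁_nonneg h₁_le sum_sq_le

/-- lower bound `b₁ ‖e_R‖² ≤ Ψ(R,R_d)`. -/
theorem psi_lower_bound (g : Fin 3 → ℝ) (hpos : ∀ i, 0 < g i)
    (hdist : Function.Injective g)
    (h₁ h₂ h₃ b₁ : ℝ)
    (hh₁ : h₁ = min (g 0 + g 1) (min (g 1 + g 2) (g 2 + g 0)))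
    (hh₂ : h₂ = max ((g 0 - g 1) ^ 2) (max ((g 1 - g 2) ^ 2) ((g 2 - g 0) ^ 2)))
    (hh₃ : h₃ = max ((g 0 + g 1) ^ 2) (max ((g 1 + g 2) ^ 2) ((g 2 + g 0) ^ 2)))
    (hb₁ : b₁ = h₁ / (h₂ + h₃))
    (R Rd : Matrix (Fin 3) (Fin 3) ℝ) (hR : SO3 R) (hRd : SO3 Rd) :
    b₁ * norm3 (eR (diagonal g) R Rd) ^ 2 ≤ Psi (diagonal g) R Rd :=
  psi_lower_bound_general g (fun i j _ ↦ (add_pos (hpos i) (hpos j)).le)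
    (Function.ne_iff.mpr ⟨0, (hpos 0).ne'⟩) h₁ h₂ h₃ b₁ hh₁ hh₂ hh₃ hb₁ R Rd hR hRd
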